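/- (Cassini's like identity for bi-periodic Fibonacci quaternions) For every integer n ≥ 1, Q_{2(n-1)}·Q_{2(n+1)} − Q_{2n}² = Q_0·Q_4 − Q_2². -/

import Mathlib

noncomputable def w (a b w0 w1 : ℝ) : ℕ → ℝ
  | 0 => w0
  | 1 => w1
  | n + 2 => (if Even (n + 2) then a else b) * w a b w0 w1 (n + 1) + w a b w0 w1 n

/-- The standard basis `e_0 = 1, e_1 = i, e_2 = j, e_3 = k` of the real quaternions. -/
noncomputable def e : ℕ → Quaternion ℝ
  | 0 => 1
  | 1 => ⟨0, 1, 0, 0⟩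
  | 2 => ⟨0, 0, 1, 0⟩
  | _ => ⟨0, 0, 0, 1⟩

/-- The generalized bi-periodic Fibonacci quaternion `W_n = ∑_{l=0}^{3} w_{n+l} e_l`. -/
noncomputable def W (a b w0 w1 : ℝ) (n : ℕ) : Quaternion ℝ :=
  ∑ l ∈ Finset.range 4, w a b w0 w1 (n + l) • e l

/-- The bi-periodic Fibonacci quaternion `Q_n`, i.e. `W_n` with `w_0 = 0`, `w_1 = 1`. -/
noncomputable def Q (a b : ℝ) (n : ℕ) : Quaternion ℝ :=
  W a b 0 1 n

/-! Every second term of `w` satisfies `w (n + 4) = (a * b + 2) * w (n + 2) - w n`, whose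
coefficients do not depend on the parity of `n`, and `W` inherits this recurrence coordinatewise.
For a sequence with `u (n + 2) = c • u (n + 1) - u n` and scalar `c`, eliminating `u (n + 3)` from
`u (n + 1) * u (n + 3) - u (n + 2) ^ 2` and `u n` from `u n * u (n + 2) - u (n + 1) ^ 2` turns both
into `c • (u (n + 1) * u (n + 2)) - u (n + 1) ^ 2 - u (n + 2) ^ 2`, even though the terms of `u`
need not commute. -/

section LinearRecurrence

variable {S R : Type*} [NonUnitalNonAssocRing R] [SMul S R] [SMulCommClass S R R]
  [IsScalarTower S R R]

theorem mul_smul_sub_sub_mul_self (c : S) (x y : R) :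
    x * (c • y - x) - y * y = (c • x - y) * y - x * x := by
  rw [mul_sub, sub_mul, mul_smul_comm, smul_mul_assoc, sub_right_comm]

theorem cassini_of_linear_recurrence {u : ℕ → R} {c : S}
    (hu : ∀ n, u (n + 2) = c • u (n + 1) - u n) (n : ℕ) :
    u n * u (n + 2) - u (n + 1) * u (n + 1) = u 0 * u 2 - u 1 * u 1 := by
  induction n with
  | zero => rfl
  | succ n ih =>
    have backward : u n = c • u (n + 1) - u (n + 2) := by rw [hu n, sub_sub_cancel]
    calc
      u (n + 1) * u (n + 3) - u (n + 2) * u (n + 2)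
      _ = u (n + 1) * (c • u (n + 2) - u (n + 1)) - u (n + 2) * u (n + 2) := by rw [hu (n + 1)]
      _ = (c • u (n + 1) - u (n + 2)) * u (n + 2) - u (n + 1) * u (n + 1) :=
        mul_smul_sub_sub_mul_self c _ _
      _ = u n * u (n + 2) - u (n + 1) * u (n + 1) := by rw [← backward]
      _ = u 0 * u 2 - u 1 * u 1 := ih

end LinearRecurrence

section BiPeriodic

variable (a b w0 w1 : ℝ) (n : ℕ)

theorem w_add_two :
    w a b w0 w1 (n + 2) = (if Even n then a else b) * w a b w0 w1 (n + 1) + w a b w0 w1 n := by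
  simp only [w, Nat.even_add, even_two, iff_true]

theorem w_add_three :
    w a b w0 w1 (n + 3) =
      (if Even n then b else a) * w a b w0 w1 (n + 2) + w a b w0 w1 (n + 1) := by
  rw [w_add_two a b w0 w1 (n + 1)]
  simp only [Nat.even_add_one, ite_not]

theorem w_add_four :
    w a b w0 w1 (n + 4) = (a * b + 2) * w a b w0 w1 (n + 2) - w a b w0 w1 n := by
  have coeff_mul : (if Even n then a else b) * (if Even n then b else a) = a * b := by
    split_ifs
    · rfl
    · exact mul_comm b a
  have step_four : w a b w0 w1 (n + 4) =
      (if Even n then a else b) * w a b w0 w1 (n + 3) + w a b w0 w1 (n + 2) := by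
    rw [w_add_two a b w0 w1 (n + 2)]
    simp only [Nat.even_add, even_two, iff_true]
  linear_combination step_four + (if Even n then a else b) * w_add_three a b w0 w1 n -
    w_add_two a b w0 w1 n + w a b w0 w1 (n + 2) * coeff_mul

theorem W_add_four :
    W a b w0 w1 (n + 4) = (a * b + 2) • W a b w0 w1 (n + 2) - W a b w0 w1 n := by
  simp only [W, Finset.smul_sum, ← Finset.sum_sub_distrib, smul_smul, ← sub_smul,
    add_right_comm n _, w_add_four]

end BiPeriodic

theorem stmt10_general (a b w0 w1 : ℝ) (m n : ℕ) :
    W a b w0 w1 (m + 2 * n) * W a b w0 w1 (m + 2 * n + 4) - W a b w0 w1 (m + 2 * n + 2) ^ 2 =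
      W a b w0 w1 m * W a b w0 w1 (m + 4) - W a b w0 w1 (m + 2) ^ 2 := by
  simp only [sq]
  exact cassini_of_linear_recurrence (u := fun k ↦ W a b w0 w1 (m + 2 * k))
    (fun k ↦ W_add_four a b w0 w1 (m + 2 * k)) n

/-- Cassini's like identity for the bi-periodic Fibonacci quaternions. -/
theorem stmt10 (a b : ℝ) (ha : a ≠ 0) (hb : b ≠ 0) (n : ℕ) (hn : 1 ≤ n) :
    Q a b (2 * (n - 1)) * Q a b (2 * (n + 1)) - Q a b (2 * n) ^ 2 =
      Q a b 0 * Q a b 4 - Q a b 2 ^ 2 := by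
  obtain ⟨k, rfl⟩ := Nat.exists_eq_add_of_le' hn
  simpa [Q, mul_add] using stmt10_general a b 0 1 0 k
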